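/- In the U-statistic setting, if max_{α∈Λ_{n,ℓ}} ‖f(X_α) − c_α‖_∞ =: L ∈ (0,∞) and Var[U_n] > 0, then d_K( (U_n − E[U_n])/√(Var[U_n]) , N(0,1) ) ≤ 227.5 · √(ℓ²(m+1)/n) · Ξ_∞^{−3}, where Ξ_∞ := (1/L)·√( Var[V_n] / (ℓ²(m+1)·n^{2ℓ−1}) ) ∈ (0,1]. -/

import Mathlib

open MeasureTheory ProbabilityTheory Filter

noncomputable section

/-- `G` is a dependency graph of the family `Y`: whenever `V₁, V₂` are disjoint sets of
vertices with no edge of `G` between them, the families `(Y k)_{k ∈ V₁}` and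
`(Y k)_{k ∈ V₂}` are independent. -/
def IsDependencyGraph {Ω V E : Type*} [MeasurableSpace Ω] [MeasurableSpace E]
    (μ : Measure Ω) (G : SimpleGraph V) (Y : V → Ω → E) : Prop :=
  ∀ V₁ V₂ : Set V, Disjoint V₁ V₂ →
    (∀ i ∈ V₁, ∀ j ∈ V₂, ¬ G.Adj i j) →
    IndepFun (fun ω (i : V₁) => Y i.1 ω) (fun ω (j : V₂) => Y j.1 ω) μ

/-- Kolmogorov distance between the law of `W` under `μ` and the standard normal law. -/
def dKolNormal {Ω : Type*} [MeasurableSpace Ω] (μ : Measure Ω) (W : Ω → ℝ) : ℝ :=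
  ⨆ t : ℝ, |(μ {ω | W ω ≤ t}).toReal - (gaussianReal 0 1 (Set.Iic t)).toReal|

set_option linter.unusedSectionVars false

def gphi (x : ℝ) : ℝ := Real.exp (-(1/2) * x ^ 2)

lemma gphi_pos (x : ℝ) : 0 < gphi x := Real.exp_pos _

lemma gphi_cont : Continuous gphi := by unfold gphi; fun_prop

lemma gphi_int : Integrable gphi := integrable_exp_neg_mul_sq (by norm_num)

lemma gphi_integral_le : ∫ x, gphi x ≤ 3 := by
  unfold gphi
  rw [integral_gaussian]
  rw [Real.sqrt_le_left (by norm_num)]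
  have := Real.pi_lt_d2
  norm_num; linarith

lemma gphi_tail3 {w : ℝ} (hw : 0 ≤ w) : ∫ x in Set.Ioi w, gphi x ≤ 3 * gphi w := by
  have h1 : ∫ x in Set.Ioi w, gphi x ≤ ∫ x in Set.Ioi w, gphi w * gphi (x - w) := by
    apply setIntegral_mono_on gphi_int.integrableOn
      ((gphi_int.comp_sub_right w).const_mul _).integrableOn measurableSet_Ioi
    intro x hx
    have hx : w < x := hx
    unfold gphi
    rw [← Real.exp_add]
    apply Real.exp_le_exp.2
    nlinarith
  have h2 : ∫ x in Set.Ioi w, gphi w * gphi (x - w) ≤ ∫ x, gphi w * gphi (x - w) := by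
    apply setIntegral_le_integral ((gphi_int.comp_sub_right w).const_mul _)
    exact Eventually.of_forall fun x => (mul_pos (gphi_pos _) (gphi_pos _)).le
  have h3 : ∫ x, gphi w * gphi (x - w) = gphi w * ∫ x, gphi x := by
    rw [integral_const_mul, integral_sub_right_eq_self]
  nlinarith [gphi_integral_le, gphi_pos w]

lemma gphi_tail1 (w : ℝ) : w * ∫ x in Set.Ioi w, gphi x ≤ gphi w := by
  have hi : Integrable (fun x => x * gphi x) := integrable_mul_exp_neg_mul_sq (by norm_num)
  have hd : ∀ x, HasDerivAt (fun x => - gphi x) (x * gphi x) x := by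
    intro x
    have h := ((((hasDerivAt_id x).pow 2).const_mul (-(1/2:ℝ))).exp).neg
    refine h.congr_deriv ?_
    simp [gphi]; ring
  have ht : Tendsto (fun x => - gphi x) atTop (nhds (-0)) := by
    apply Tendsto.neg
    unfold gphi
    apply Real.tendsto_exp_atBot.comp
    apply Tendsto.const_mul_atTop_of_neg (by norm_num)
    exact tendsto_pow_atTop (by norm_num)
  have h2 := integral_Ioi_of_hasDerivAt_of_tendsto' (a := w) (fun x _ => hd x) hi.integrableOn ht
  have : ∫ x in Set.Ioi w, w * gphi x ≤ ∫ x in Set.Ioi w, x * gphi x := by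
    apply setIntegral_mono_on (gphi_int.const_mul _).integrableOn hi.integrableOn measurableSet_Ioi
    intro x hx
    exact mul_le_mul_of_nonneg_right (le_of_lt hx) (gphi_pos _).le
  rw [integral_const_mul] at this
  linarith

lemma tail_abs (g : ℝ → ℝ) (hg : ∀ x, |g x| ≤ 1) (w : ℝ) :
    |∫ x in Set.Ioi w, g x * gphi x| ≤ ∫ x in Set.Ioi w, gphi x := by
  rw [← Real.norm_eq_abs]
  apply norm_integral_le_of_norm_le gphi_int.integrableOn
  refine Eventually.of_forall fun x => ?_
  rw [norm_mul, Real.norm_eq_abs, Real.norm_eq_abs, abs_of_pos (gphi_pos x)]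
  nlinarith [hg x, gphi_pos x]

lemma gauss_int_eq (g : ℝ → ℝ) :
    ∫ x, g x ∂gaussianReal 0 1 = (√(2 * Real.pi))⁻¹ * ∫ x, g x * gphi x := by
  rw [integral_gaussianReal_eq_integral_smul one_ne_zero, ← integral_const_mul]
  congr 1; ext x
  simp [gaussianPDFReal, gphi]
  ring_nf

lemma stein_sol (h : ℝ → ℝ) (hc : Continuous h) (h0 : ∀ x, 0 ≤ h x) (h1 : ∀ x, h x ≤ 1) :
    ∃ f f' : ℝ → ℝ, (∀ w, HasDerivAt f (f' w) w) ∧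
      (∀ w, f' w = w * f w + (h w - ∫ x, h x ∂gaussianReal 0 1)) ∧
      (∀ w, |f w| ≤ 3) ∧ (∀ w, |f' w| ≤ 2) := by
  have hint : Integrable h (gaussianReal 0 1) := by
    refine Integrable.of_bound (C := 1) hc.aestronglyMeasurable ?_
    refine Eventually.of_forall fun x => ?_
    rw [Real.norm_eq_abs, abs_le]; constructor <;> linarith [h0 x, h1 x]
  set c := ∫ x, h x ∂gaussianReal 0 1 with hcdef
  have c0 : 0 ≤ c := integral_nonneg h0
  have c1 : c ≤ 1 := by
    have := integral_mono hint (integrable_const (1:ℝ)) h1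
    simpa using this
  set g : ℝ → ℝ := fun x => h x - c with hgdef
  have hgc : Continuous g := by fun_prop
  have hg : ∀ x, |g x| ≤ 1 := fun x => by
    rw [abs_le]; constructor <;> simp only [hgdef] <;> linarith [h0 x, h1 x]
  have hgphi : Integrable (fun x => g x * gphi x) := by
    refine gphi_int.bdd_mul (c := 1) hgc.aestronglyMeasurable ?_
    exact Eventually.of_forall hg
  have hzero : ∫ x, g x * gphi x = 0 := by
    have h3 : ∫ x, g x ∂gaussianReal 0 1 = 0 := by
      simp only [hgdef]
      rw [integral_sub hint (integrable_const _)]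
      simp [hcdef]
    rw [gauss_int_eq] at h3
    have : (√(2 * Real.pi))⁻¹ ≠ 0 := by positivity
    exact (mul_eq_zero.1 h3).resolve_left this
  set F : ℝ → ℝ := fun w => ∫ x in Set.Iic w, g x * gphi x with hF
  have hFd : ∀ w, HasDerivAt F (g w * gphi w) w := by
    intro w
    have e : F = fun w => F 0 + ∫ x in (0:ℝ)..w, g x * gphi x := by
      ext w
      rw [← intervalIntegral.integral_Iic_sub_Iic hgphi.integrableOn hgphi.integrableOn]
      simp only [hF]; ring
    rw [e]
    apply HasDerivAt.const_add
    exact ((hgc.mul gphi_cont).integral_hasStrictDerivAt 0 w).hasDerivAt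
  have hFb : ∀ w, |F w| ≤ 3 * gphi w ∧ |w| * |F w| ≤ gphi w := by
    intro w
    rcases le_total 0 w with hw | hw
    · have e : F w = - ∫ x in Set.Ioi w, g x * gphi x := by
        have := intervalIntegral.integral_Iic_add_Ioi (b := w) hgphi.integrableOn hgphi.integrableOn
        rw [hzero] at this
        simp only [hF]; linarith
      rw [e, abs_neg, abs_of_nonneg hw]
      have := tail_abs g hg w
      exact ⟨this.trans (gphi_tail3 hw),
        (mul_le_mul_of_nonneg_left this hw).trans (gphi_tail1 w)⟩
    · have e : F w = ∫ x in Set.Ioi (-w), (fun y => g (-y)) x * gphi x := by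
        have := integral_comp_neg_Ioi (-w) (fun x => g x * gphi x)
        simp only [neg_neg] at this
        show ∫ x in Set.Iic w, g x * gphi x = _
        rw [← this]
        simp [gphi]
      have hgw : gphi w = gphi (-w) := by simp [gphi]
      rw [e, hgw, abs_of_nonpos hw]
      have := tail_abs (fun y => g (-y)) (fun y => hg _) (-w)
      exact ⟨this.trans (gphi_tail3 (by linarith)),
        (mul_le_mul_of_nonneg_left this (by linarith)).trans (gphi_tail1 (-w))⟩
  have hinv : ∀ w, (gphi w)⁻¹ = Real.exp (1/2 * w^2) := by
    intro w; simp only [gphi]; rw [← Real.exp_neg]; ring_nf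
  have hfb : ∀ w, |(gphi w)⁻¹ * F w| ≤ 3 ∧ |w * ((gphi w)⁻¹ * F w)| ≤ 1 := by
    intro w
    have hp := gphi_pos w
    obtain ⟨ha, hb⟩ := hFb w
    rw [abs_mul, abs_mul, abs_mul, abs_of_pos (inv_pos.2 hp)]
    constructor
    · rw [inv_mul_le_iff₀ hp]; linarith
    · rw [mul_left_comm, inv_mul_le_iff₀ hp]; linarith
  refine ⟨fun w => (gphi w)⁻¹ * F w, fun w => w * ((gphi w)⁻¹ * F w) + g w, ?_, ?_, fun w => (hfb w).1, ?_⟩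
  · intro w
    have hd : HasDerivAt (fun w => (gphi w)⁻¹) (w * (gphi w)⁻¹) w := by
      simp only [hinv]
      refine ((((hasDerivAt_id w).pow 2).const_mul (1/2:ℝ)).exp).congr_deriv ?_
      simp; ring
    refine (hd.mul (hFd w)).congr_deriv ?_
    have hp := (gphi_pos w).ne'
    field_simp
  · intro w; rfl
  · intro w
    have := abs_add_le (w * ((gphi w)⁻¹ * F w)) (g w)
    have h2 := (hfb w).2
    have h3 := hg w
    simp only
    linarith

lemma gauss_Iic_sub {a b : ℝ} (hab : a ≤ b) :
    (gaussianReal 0 1 (Set.Iic b)).toReal - (gaussianReal 0 1 (Set.Iic a)).toReal ≤ (b - a) / 2 := by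
  have h1 : (gaussianReal 0 1).real (Set.Iic b) - (gaussianReal 0 1).real (Set.Iic a)
      = (gaussianReal 0 1).real (Set.Ioc a b) := by
    have e : Set.Ioc a b = Set.Iic b \ Set.Iic a := by
      ext x; simp [and_comm]
    rw [e, measureReal_sdiff (Set.Iic_subset_Iic.2 hab) measurableSet_Iic]
  change (gaussianReal 0 1).real (Set.Iic b) - (gaussianReal 0 1).real (Set.Iic a) ≤ _
  rw [h1]
  have h2 : gaussianReal 0 1 (Set.Ioc a b) ≤ ENNReal.ofReal ((b - a) / 2) := by
    rw [gaussianReal_apply _ one_ne_zero]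
    calc ∫⁻ x in Set.Ioc a b, gaussianPDF 0 1 x ≤ ∫⁻ x in Set.Ioc a b, ENNReal.ofReal (1/2) := by
          apply lintegral_mono
          intro x
          simp only [gaussianPDF]
          apply ENNReal.ofReal_le_ofReal
          simp only [gaussianPDFReal]
          have e1 : Real.exp (-(x - 0) ^ 2 / (2 * ((1 : NNReal) : ℝ))) ≤ 1 := by
            apply Real.exp_le_one_iff.2
            simp only [NNReal.coe_one]
            nlinarith [sq_nonneg (x - 0)]
          have e2 : (2:ℝ) ≤ √(2 * Real.pi * ((1 : NNReal) : ℝ)) := by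
            apply Real.le_sqrt_of_sq_le
            have := Real.pi_gt_three
            simp only [NNReal.coe_one]
            linarith
          have e3 : (√(2 * Real.pi * ((1 : NNReal) : ℝ)))⁻¹ ≤ 1/2 := by
            rw [one_div]; exact inv_anti₀ (by norm_num) e2
          calc _ ≤ (1/2 : ℝ) * 1 := mul_le_mul e3 e1 (Real.exp_pos _).le (by norm_num)
            _ = 1/2 := by norm_num
      _ = ENNReal.ofReal ((b - a) / 2) := by
          rw [setLIntegral_const, Real.volume_Ioc, ← ENNReal.ofReal_mul (by norm_num)]
          ring_nf
  exact ENNReal.toReal_le_of_le_ofReal (by linarith) h2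

def smoothInd (z ε x : ℝ) : ℝ := max 0 (min 1 ((z + ε - x) / ε))

lemma smoothInd_cont (z ε : ℝ) : Continuous (smoothInd z ε) := by
  unfold smoothInd; fun_prop

lemma smoothInd_nonneg (z ε x : ℝ) : 0 ≤ smoothInd z ε x := le_max_left _ _

lemma smoothInd_le_one (z ε x : ℝ) : smoothInd z ε x ≤ 1 :=
  max_le zero_le_one (min_le_left _ _)

lemma smoothInd_eq_one {z ε x : ℝ} (hε : 0 < ε) (h : x ≤ z) : smoothInd z ε x = 1 := by
  unfold smoothInd
  rw [min_eq_left, max_eq_right zero_le_one]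
  rw [le_div_iff₀ hε]; linarith

lemma smoothInd_eq_zero {z ε x : ℝ} (hε : 0 < ε) (h : z + ε ≤ x) : smoothInd z ε x = 0 := by
  unfold smoothInd
  apply max_eq_left
  refine (min_le_right _ _).trans ?_
  apply div_nonpos_of_nonpos_of_nonneg <;> linarith

lemma smoothInd_lip {z ε : ℝ} (hε : 0 < ε) (x y : ℝ) :
    |smoothInd z ε x - smoothInd z ε y| ≤ ε⁻¹ * |x - y| := by
  unfold smoothInd
  have h1 : |max 0 (min 1 ((z + ε - x) / ε)) - max 0 (min 1 ((z + ε - y) / ε))|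
    ≤ |min 1 ((z + ε - x) / ε) - min 1 ((z + ε - y) / ε)| := by
    have := abs_max_sub_max_le_max 0 (min 1 ((z + ε - x) / ε)) 0 (min 1 ((z + ε - y) / ε))
    simpa using this
  have h2 : |min 1 ((z + ε - x) / ε) - min 1 ((z + ε - y) / ε)| ≤
    |(z + ε - x) / ε - (z + ε - y) / ε| := by
    have := abs_min_sub_min_le_max 1 ((z + ε - x) / ε) 1 ((z + ε - y) / ε)
    simpa using this
  refine (h1.trans h2).trans_eq ?_
  rw [← sub_div, abs_div, abs_of_pos hε, abs_sub_comm, div_eq_inv_mul]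
  congr 2
  ring

def locInd (a b x : ℝ) : ℝ := (Set.Icc a b).indicator (fun _ => (1:ℝ)) x

lemma locInd_nonneg (a b x : ℝ) : 0 ≤ locInd a b x :=
  Set.indicator_nonneg (fun _ _ => zero_le_one) _

lemma locInd_le_one (a b x : ℝ) : locInd a b x ≤ 1 := by
  unfold locInd
  apply Set.indicator_le_self' (s := Set.Icc a b) (f := fun _ : ℝ => (1:ℝ)) (fun _ _ => zero_le_one) x

lemma smoothInd_loc {z ε δ : ℝ} (hε : 0 < ε) (x y : ℝ) (h : |y - x| ≤ δ) :
    |smoothInd z ε y - smoothInd z ε x| ≤ |y - x| * (ε⁻¹ * locInd (z - δ) (z + ε + δ) x) := by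
  rw [abs_le] at h
  by_cases hx : x ∈ Set.Icc (z - δ) (z + ε + δ)
  · rw [locInd, Set.indicator_of_mem hx]
    have := smoothInd_lip (z := z) hε y x
    linarith
  · rw [locInd, Set.indicator_of_notMem hx]
    rw [Set.mem_Icc, not_and_or, not_le, not_le] at hx
    rcases hx with hx | hx
    · rw [smoothInd_eq_one hε (by linarith), smoothInd_eq_one hε (by linarith)]; simp
    · rw [smoothInd_eq_zero hε (by linarith), smoothInd_eq_zero hε (by linarith)]; simp

lemma stein_taylor {z ε δ : ℝ} (hε : 0 < ε) {f f' : ℝ → ℝ} {c : ℝ}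
    (hd : ∀ w, HasDerivAt f (f' w) w)
    (he : ∀ w, f' w = w * f w + (smoothInd z ε w - c))
    (hf : ∀ w, |f w| ≤ 3) (hf' : ∀ w, |f' w| ≤ 2) (w η : ℝ) (hη : |η| ≤ δ) :
    |f w - f (w - η) - η * f' w| ≤
      η ^ 2 * (3 + 2 * |w| + ε⁻¹ * locInd (z - δ) (z + ε + δ) w) := by
  set K := 3 + 2 * |w| + ε⁻¹ * locInd (z - δ) (z + ε + δ) w with hK
  have hK0 : 0 ≤ K := by
    have := locInd_nonneg (z - δ) (z + ε + δ) w
    positivity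
  have hlip : ∀ x y, |f x - f y| ≤ 2 * |x - y| := by
    intro x y
    have := Convex.norm_image_sub_le_of_norm_hasDerivWithin_le (f := f) (f' := f') (C := 2)
      (s := Set.univ) (x := y) (y := x) (fun x _ => (hd x).hasDerivWithinAt) (fun x _ => hf' x)
      convex_univ trivial trivial
    simpa using this
  have hinc : ∀ y, |y - w| ≤ |η| → |f' y - f' w| ≤ |η| * K := by
    intro y hy
    have e : f' y - f' w = (y - w) * f y + w * (f y - f w) + (smoothInd z ε y - smoothInd z ε w) := by
      rw [he y, he w]; ring
    rw [e]
    have h1 : |(y - w) * f y| ≤ |y - w| * 3 := by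
      rw [abs_mul]; exact mul_le_mul_of_nonneg_left (hf y) (abs_nonneg _)
    have h2 : |w * (f y - f w)| ≤ |w| * (2 * |y - w|) := by
      rw [abs_mul]; exact mul_le_mul_of_nonneg_left (hlip _ _) (abs_nonneg _)
    have h3 := smoothInd_loc (z := z) hε w y (hy.trans hη)
    have h4 := abs_add_three ((y - w) * f y) (w * (f y - f w)) (smoothInd z ε y - smoothInd z ε w)
    have h5 : |y - w| * K ≤ |η| * K := mul_le_mul_of_nonneg_right hy hK0
    rw [hK] at h5 ⊢
    linarith
  have hm := Convex.norm_image_sub_le_of_norm_hasDerivWithin_le (f := fun x => f x - f' w * x)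
      (f' := fun x => f' x - f' w) (C := |η| * K)
      (s := Set.uIcc (w - η) w) (x := w - η) (y := w)
      (fun x _ => by
        have := (hd x).sub ((hasDerivAt_id x).const_mul (f' w))
        simp only [mul_one] at this
        exact this.hasDerivWithinAt) (fun x hx => by
        apply hinc
        have := Set.abs_sub_right_of_mem_uIcc hx
        rw [abs_sub_comm]
        simpa using this)
      (convex_uIcc _ _) Set.left_mem_uIcc Set.right_mem_uIcc
  simp only [Real.norm_eq_abs] at hm
  have e1 : f w - f' w * w - (f (w - η) - f' w * (w - η)) = f w - f (w - η) - η * f' w := by ring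
  have e2 : w - (w - η) = η := by ring
  rw [e1, e2] at hm
  calc _ ≤ _ := hm
    _ = |η| ^ 2 * K := by ring
    _ = η ^ 2 * K := by rw [sq_abs]

lemma bint {Ω : Type*} [MeasurableSpace Ω] {μ : Measure Ω} [IsProbabilityMeasure μ]
    {f : Ω → ℝ} (C : ℝ) (hf : Measurable f) (hb : ∀ ω, |f ω| ≤ C) : Integrable f μ :=
  Integrable.of_bound (C := C) hf.aestronglyMeasurable (Eventually.of_forall hb)

lemma var_bound {Ω P : Type*} [MeasurableSpace Ω] (μ : Measure Ω) [IsProbabilityMeasure μ]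
    [DecidableEq P] (S : Finset P) (Z : P → Ω → ℝ) (hm : ∀ p, Measurable (Z p)) (C : ℝ)
    (hC : ∀ p ω, |Z p ω| ≤ C) (Q : P → Finset P) (K v : ℝ)
    (hK : ∀ p ∈ S, ((Q p).card : ℝ) ≤ K) (hv0 : 0 ≤ v)
    (h0 : ∀ p ∈ S, ∀ q ∈ S, q ∉ Q p → ∫ ω, Z p ω * Z q ω ∂μ = 0)
    (hv : ∀ p, ∫ ω, Z p ω ^ 2 ∂μ ≤ v) :
    ∫ ω, (∑ p ∈ S, Z p ω) ^ 2 ∂μ ≤ S.card * K * v := by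
  have hC2 : ∀ p q ω, |Z p ω * Z q ω| ≤ C * C := fun p q ω => by
    rw [abs_mul]
    exact mul_le_mul (hC p ω) (hC q ω) (abs_nonneg _) ((abs_nonneg _).trans (hC p ω))
  have hi : ∀ p q, Integrable (fun ω => Z p ω * Z q ω) μ := fun p q =>
    bint (C * C) ((hm p).mul (hm q)) (hC2 p q)
  have hcs : ∀ p q, ∫ ω, Z p ω * Z q ω ∂μ ≤ v := by
    intro p q
    have hp : Integrable (fun ω => Z p ω ^ 2) μ := by simpa [sq] using hi p p
    have hq : Integrable (fun ω => Z q ω ^ 2) μ := by simpa [sq] using hi q q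
    have : ∫ ω, Z p ω * Z q ω ∂μ ≤ ∫ ω, (Z p ω ^ 2 + Z q ω ^ 2) * (1/2) ∂μ := by
      apply integral_mono (hi p q) ((hp.add hq).mul_const _)
      intro ω
      simp only [Pi.add_apply]
      nlinarith [sq_nonneg (Z p ω - Z q ω)]
    rw [integral_mul_const, integral_add hp hq] at this
    linarith [hv p, hv q]
  have e : ∫ ω, (∑ p ∈ S, Z p ω) ^ 2 ∂μ = ∑ p ∈ S, ∑ q ∈ S, ∫ ω, Z p ω * Z q ω ∂μ := by
    have : ∀ ω, (∑ p ∈ S, Z p ω) ^ 2 = ∑ p ∈ S, ∑ q ∈ S, Z p ω * Z q ω := by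
      intro ω; rw [sq, Finset.sum_mul_sum]
    simp only [this]
    rw [integral_finsetSum _ (fun p _ => integrable_finsetSum _ (fun q _ => hi p q))]
    refine Finset.sum_congr rfl fun p _ => ?_
    rw [integral_finsetSum _ (fun q _ => hi p q)]
  rw [e]
  calc ∑ p ∈ S, ∑ q ∈ S, ∫ ω, Z p ω * Z q ω ∂μ ≤ ∑ p ∈ S, K * v := by
        refine Finset.sum_le_sum fun p hp => ?_
        calc ∑ q ∈ S, ∫ ω, Z p ω * Z q ω ∂μ ≤ ∑ q ∈ S, if q ∈ Q p then v else 0 := by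
              refine Finset.sum_le_sum fun q hq => ?_
              split_ifs with h
              · exact hcs p q
              · exact (h0 p hp q hq h).le
          _ = ∑ q ∈ S.filter (· ∈ Q p), v := by rw [Finset.sum_filter]
          _ = ((S.filter (· ∈ Q p)).card : ℝ) * v := by simp
          _ ≤ K * v := by
              apply mul_le_mul_of_nonneg_right _ hv0
              refine le_trans ?_ (hK p hp)
              exact_mod_cast Finset.card_le_card (fun x hx => (Finset.mem_filter.1 hx).2)
    _ = S.card * K * v := by simp; ring

/-- Structure collecting the assumptions for the abstract bound. -/
structure DepData {Ω ι : Type*} [MeasurableSpace Ω] [Fintype ι] [DecidableEq ι] (μ : Measure Ω)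
    (ξ : ι → Ω → ℝ) (Nb : ι → Finset ι) (b N D : ℝ) : Prop where
  meas : ∀ i, Measurable (ξ i)
  bpos : 0 < b
  bdd : ∀ i ω, |ξ i ω| ≤ b
  mean : ∀ i, ∫ ω, ξ i ω ∂μ = 0
  symm : ∀ i j, j ∈ Nb i → i ∈ Nb j
  ind1 : ∀ i, IndepFun (ξ i) (fun ω => ∑ j ∈ (Nb i)ᶜ, ξ j ω) μ
  ind2 : ∀ i j, j ∉ Nb i → IndepFun (ξ i) (ξ j) μ
  ind3 : ∀ i j k l, k ∉ Nb i → k ∉ Nb j → l ∉ Nb i → l ∉ Nb j →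
    IndepFun (fun ω => ξ i ω * ξ j ω) (fun ω => ξ k ω * ξ l ω) μ
  Npos : 0 < N
  Dpos : 0 < D
  cardN : (Fintype.card ι : ℝ) ≤ N
  cardD : ∀ i, ((Nb i).card : ℝ) ≤ D
  norm : ∫ ω, (∑ i, ξ i ω) ^ 2 ∂μ = 1
  ge1 : 1 ≤ N * D * b ^ 2

section
variable {Ω ι : Type*} [MeasurableSpace Ω] [Fintype ι] [DecidableEq ι] {μ : Measure Ω}
    [IsProbabilityMeasure μ] {ξ : ι → Ω → ℝ} {Nb : ι → Finset ι} {b N D : ℝ}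

def dT (ξ : ι → Ω → ℝ) (Nb : ι → Finset ι) (ω : Ω) : ℝ := ∑ i, ξ i ω * ∑ j ∈ Nb i, ξ j ω

lemma DepData.prodb (h : DepData μ ξ Nb b N D) (i j : ι) (ω : Ω) : |ξ i ω * ξ j ω| ≤ b ^ 2 := by
  rw [abs_mul, sq]
  exact mul_le_mul (h.bdd i ω) (h.bdd j ω) (abs_nonneg _) h.bpos.le

lemma DepData.intprod (h : DepData μ ξ Nb b N D) (i j : ι) :
    Integrable (fun ω => ξ i ω * ξ j ω) μ :=
  bint (b ^ 2) ((h.meas i).mul (h.meas j)) (h.prodb i j)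

lemma DepData.T_mean (h : DepData μ ξ Nb b N D) :
    ∑ i, ∑ j ∈ Nb i, ∫ ω, ξ i ω * ξ j ω ∂μ = 1 := by
  rw [← h.norm]
  have : ∀ ω, (∑ p, ξ p ω) ^ 2 = ∑ p, ∑ q, ξ p ω * ξ q ω := by
    intro ω; rw [sq, Finset.sum_mul_sum]
  simp only [this]
  rw [integral_finsetSum _ (fun p _ => integrable_finsetSum _ (fun q _ => h.intprod p q))]
  refine Finset.sum_congr rfl fun p _ => ?_
  rw [integral_finsetSum _ (fun q _ => h.intprod p q)]
  apply Finset.sum_subset (Finset.subset_univ _)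
  intro q _ hq
  have := (h.ind2 p q hq).integral_mul_eq_mul_integral (h.meas p).aestronglyMeasurable
    (h.meas q).aestronglyMeasurable
  simp only [Pi.mul_apply] at this
  rw [this, h.mean p, zero_mul]

lemma DepData.T_var (h : DepData μ ξ Nb b N D) :
    ∫ ω, (dT ξ Nb ω - 1) ^ 2 ∂μ ≤ 4 * (N * D ^ 3 * b ^ 4) := by
  classical
  let S : Finset (Σ _ : ι, ι) := Finset.univ.sigma Nb
  let e : (Σ _ : ι, ι) → ℝ := fun p => ∫ ω, ξ p.1 ω * ξ p.2 ω ∂μ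
  let Z : (Σ _ : ι, ι) → Ω → ℝ := fun p ω => ξ p.1 ω * ξ p.2 ω - e p
  let A : ι → Finset (Σ _ : ι, ι) := fun i => (Nb i).sigma Nb
  let sw : (Σ _ : ι, ι) → (Σ _ : ι, ι) := fun p => ⟨p.2, p.1⟩
  let Q : (Σ _ : ι, ι) → Finset (Σ _ : ι, ι) := fun p =>
    (A p.1 ∪ A p.2) ∪ ((A p.1).image sw ∪ (A p.2).image sw)
  have hb := h.bpos
  have hN := h.Npos
  have hD := h.Dpos
  have hsum : ∀ ω, dT ξ Nb ω - 1 = ∑ p ∈ S, Z p ω := by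
    intro ω
    rw [← h.T_mean]
    simp only [dT, S, Z, e, Finset.sum_sub_distrib, Finset.sum_sigma, Finset.mul_sum]
  have hA : ∀ i, ((A i).card : ℝ) ≤ D ^ 2 := by
    intro i
    simp only [A, Finset.card_sigma]
    push_cast
    calc ∑ j ∈ Nb i, ((Nb j).card : ℝ) ≤ ∑ j ∈ Nb i, D := Finset.sum_le_sum fun j _ => h.cardD j
      _ = (Nb i).card * D := by simp
      _ ≤ D * D := mul_le_mul_of_nonneg_right (h.cardD i) hD.le
      _ = D ^ 2 := by ring
  have hQ : ∀ p, ((Q p).card : ℝ) ≤ 4 * D ^ 2 := by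
    intro p
    have h1 : (Q p).card ≤ ((A p.1).card + (A p.2).card) + ((A p.1).card + (A p.2).card) := by
      refine (Finset.card_union_le _ _).trans ?_
      refine add_le_add (Finset.card_union_le _ _) ((Finset.card_union_le _ _).trans ?_)
      exact add_le_add Finset.card_image_le Finset.card_image_le
    have h2 : ((Q p).card : ℝ) ≤ (((A p.1).card + (A p.2).card) + ((A p.1).card + (A p.2).card) : ℝ) := by
      exact_mod_cast h1
    linarith [hA p.1, hA p.2]
  have hS : (S.card : ℝ) ≤ N * D := by
    simp only [S, Finset.card_sigma]
    push_cast
    calc ∑ j, ((Nb j).card : ℝ) ≤ ∑ j : ι, D := Finset.sum_le_sum fun j _ => h.cardD j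
      _ = Fintype.card ι * D := by simp
      _ ≤ N * D := mul_le_mul_of_nonneg_right h.cardN hD.le
  have he : ∀ p, |e p| ≤ b ^ 2 := by
    intro p
    have := norm_integral_le_of_norm_le_const (μ := μ) (C := b ^ 2)
      (f := fun ω => ξ p.1 ω * ξ p.2 ω)
      (Eventually.of_forall fun ω => h.prodb p.1 p.2 ω)
    simpa using this
  have hZm : ∀ p, Measurable (Z p) := fun p => ((h.meas p.1).mul (h.meas p.2)).sub_const _
  have hZint : ∀ p : (Σ _ : ι, ι), Integrable (fun ω => ξ p.1 ω * ξ p.2 ω) μ := fun p => h.intprod p.1 p.2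
  have key := var_bound μ S Z hZm (2 * b ^ 2)
    (fun p ω => by
      have h1 := h.prodb p.1 p.2 ω
      have h2 := he p
      have := abs_sub (ξ p.1 ω * ξ p.2 ω) (e p)
      simp only [Z]; linarith) Q (4 * D ^ 2) (b ^ 4) (fun p _ => hQ p) (by positivity)
    (by
      intro p hp q hq hpq
      simp only [S, Finset.mem_sigma, Finset.mem_univ, true_and] at hp hq
      have hq' := h.symm _ _ hq
      obtain ⟨i, j⟩ := p
      obtain ⟨k, l⟩ := q
      simp only [Q, A, sw, Finset.mem_union, Finset.mem_sigma, Finset.mem_image, not_or] at hpq hq hq'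
      obtain ⟨⟨h1, h2⟩, h3, h4⟩ := hpq
      have h1 : k ∉ Nb i := fun hh => h1 ⟨hh, hq⟩
      have h2 : k ∉ Nb j := fun hh => h2 ⟨hh, hq⟩
      have h3 : l ∉ Nb i := fun hh => h3 ⟨⟨l, k⟩, ⟨hh, hq'⟩, rfl⟩
      have h4 : l ∉ Nb j := fun hh => h4 ⟨⟨l, k⟩, ⟨hh, hq'⟩, rfl⟩
      have hind := (h.ind3 i j k l h1 h2 h3 h4)
      have hind := hind.comp (φ := fun x => x - e ⟨i, j⟩) (ψ := fun x => x - e ⟨k, l⟩)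
        (by fun_prop) (by fun_prop)
      have := hind.integral_mul_eq_mul_integral (hZm ⟨i, j⟩).aestronglyMeasurable
        (hZm ⟨k, l⟩).aestronglyMeasurable
      simp only [Pi.mul_apply, Function.comp_apply] at this
      simp only [Z]
      rw [this, integral_sub (h.intprod _ _) (integrable_const _)]
      simp [e])
    (by
      intro p
      have h1 : ∀ ω, Z p ω ^ 2 = (ξ p.1 ω * ξ p.2 ω) ^ 2 - 2 * e p * (ξ p.1 ω * ξ p.2 ω) + e p ^ 2 := by
        intro ω; simp only [Z]; ring
      have h4 : ∀ ω, (ξ p.1 ω * ξ p.2 ω) ^ 2 ≤ b ^ 4 := by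
        intro ω
        have := pow_le_pow_left₀ (abs_nonneg _) (h.prodb p.1 p.2 ω) 2
        rw [sq_abs] at this
        calc _ ≤ _ := this
          _ = b ^ 4 := by ring
      have h2 : Integrable (fun ω => (ξ p.1 ω * ξ p.2 ω) ^ 2) μ := by
        apply bint (b ^ 4) (((h.meas p.1).mul (h.meas p.2)).pow_const 2)
        intro ω
        rw [abs_of_nonneg (by positivity)]; exact h4 ω
      simp only [h1]
      have h3 : Integrable (fun ω => 2 * e p * (ξ p.1 ω * ξ p.2 ω)) μ := (hZint p).const_mul _
      have h23 : Integrable (fun ω => (ξ p.1 ω * ξ p.2 ω) ^ 2 - 2 * e p * (ξ p.1 ω * ξ p.2 ω)) μ :=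
        h2.sub h3
      rw [integral_add h23 (integrable_const _), integral_sub h2 h3, integral_const_mul]
      have h5 : ∫ ω, (ξ p.1 ω * ξ p.2 ω) ^ 2 ∂μ ≤ b ^ 4 := by
        have := integral_mono h2 (integrable_const (b ^ 4)) h4
        simpa using this
      have h6 : ∫ ω, ξ p.1 ω * ξ p.2 ω ∂μ = e p := rfl
      rw [h6]
      simp only [integral_const, probReal_univ, one_smul]
      nlinarith [sq_nonneg (e p)])
  simp only [hsum]
  refine key.trans ?_
  calc (S.card : ℝ) * (4 * D ^ 2) * b ^ 4 ≤ (N * D) * (4 * D ^ 2) * b ^ 4 := by gcongr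
    _ = _ := by ring
end

lemma smooth_sandwich {Ω' : Type*} [MeasurableSpace Ω'] (ν : Measure Ω') [IsProbabilityMeasure ν]
    (Y : Ω' → ℝ) (hY : Measurable Y) {ε : ℝ} (hε : 0 < ε) (z : ℝ) : (ν {ω | Y ω ≤ z}).toReal ≤
      ∫ ω, smoothInd z ε (Y ω) ∂ν ∧ ∫ ω, smoothInd z ε (Y ω) ∂ν ≤
      (ν {ω | Y ω ≤ z + ε}).toReal := by
  have hm : ∀ t, MeasurableSet {ω | Y ω ≤ t} := fun t => hY measurableSet_Iic
  have hi : Integrable (fun ω => smoothInd z ε (Y ω)) ν := by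
    apply bint 1 ((smoothInd_cont _ _).measurable.comp hY)
    intro ω
    simp only [Function.comp_apply]
    rw [abs_of_nonneg (smoothInd_nonneg _ _ _)]; exact smoothInd_le_one _ _ _
  have hind : ∀ t, Integrable ({ω | Y ω ≤ t}.indicator (1 : Ω' → ℝ)) ν := fun t =>
    (integrable_const (1:ℝ)).indicator (hm t)
  constructor
  · change ν.real _ ≤ _
    rw [← integral_indicator_one (hm z)]
    apply integral_mono (hind z) hi
    intro ω
    by_cases hω : Y ω ≤ z
    · simp [Set.indicator, hω, smoothInd_eq_one hε hω]
    · simp [Set.indicator, hω, smoothInd_nonneg]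
  · change _ ≤ ν.real _
    rw [← integral_indicator_one (hm _)]
    apply integral_mono hi (hind _)
    intro ω
    by_cases hω : Y ω ≤ z + ε
    · simp [Set.indicator, hω, smoothInd_le_one]
    · simp [Set.indicator, hω, smoothInd_eq_zero hε (not_le.1 hω).le]

section
variable {Ω ι : Type*} [MeasurableSpace Ω] [Fintype ι] [DecidableEq ι] {μ : Measure Ω}
    [IsProbabilityMeasure μ] {ξ : ι → Ω → ℝ} {Nb : ι → Finset ι} {b N D : ℝ}

lemma DepData.etab (h : DepData μ ξ Nb b N D) (i : ι) (ω : Ω) :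
    |∑ j ∈ Nb i, ξ j ω| ≤ D * b := by
  calc |∑ j ∈ Nb i, ξ j ω| ≤ ∑ j ∈ Nb i, |ξ j ω| := Finset.abs_sum_le_sum_abs _ _
    _ ≤ ∑ j ∈ Nb i, b := Finset.sum_le_sum fun j _ => h.bdd j ω
    _ = (Nb i).card * b := by simp
    _ ≤ D * b := mul_le_mul_of_nonneg_right (h.cardD i) h.bpos.le

lemma DepData.Wb (h : DepData μ ξ Nb b N D) (ω : Ω) :
    |∑ j, ξ j ω| ≤ N * b := by
  calc |∑ j, ξ j ω| ≤ ∑ j, |ξ j ω| := Finset.abs_sum_le_sum_abs _ _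
    _ ≤ ∑ j : ι, b := Finset.sum_le_sum fun j _ => h.bdd j ω
    _ = Fintype.card ι * b := by simp
    _ ≤ N * b := mul_le_mul_of_nonneg_right h.cardN h.bpos.le

lemma DepData.Wm (h : DepData μ ξ Nb b N D) : Measurable (fun ω => ∑ j, ξ j ω) :=
  Finset.measurable_fun_sum _ fun i _ => h.meas i

lemma DepData.smooth (h : DepData μ ξ Nb b N D) (z ε : ℝ) (hε : 0 < ε) :
    |∫ ω, smoothInd z ε (∑ i, ξ i ω) ∂μ - ∫ x, smoothInd z ε x ∂gaussianReal 0 1| ≤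
      (N * D ^ 2 * b ^ 3) * (9 + ε⁻¹ *
        μ.real {ω | ∑ i, ξ i ω ∈ Set.Icc (z - D * b) (z + ε + D * b)}) := by
  obtain ⟨f, f', hd, he, hf, hf'⟩ := stein_sol (smoothInd z ε) (smoothInd_cont z ε)
    (smoothInd_nonneg z ε) (smoothInd_le_one z ε)
  set c := ∫ x, smoothInd z ε x ∂gaussianReal 0 1 with hc
  set δ := D * b with hδ
  set θ := N * D ^ 2 * b ^ 3 with hθ
  have hb := h.bpos
  have hN := h.Npos
  have hD := h.Dpos
  have hθ0 : 0 < θ := by positivity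
  have hfc : Continuous f := continuous_iff_continuousAt.2 fun w => (hd w).continuousAt
  have hf'c : Continuous f' := by
    have : f' = fun w => w * f w + (smoothInd z ε w - c) := funext he
    rw [this]
    have := smoothInd_cont z ε
    fun_prop
  set W : Ω → ℝ := fun ω => ∑ i, ξ i ω with hW
  have hWm : Measurable W := h.Wm
  let η : ι → Ω → ℝ := fun i ω => ∑ j ∈ Nb i, ξ j ω
  have hηm : ∀ i, Measurable (η i) := fun i => Finset.measurable_fun_sum _ fun j _ => h.meas j
  have hTm : Measurable (dT ξ Nb) :=
    Finset.measurable_fun_sum _ fun i _ => (h.meas i).mul (hηm i)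
  have hTb : ∀ ω, |dT ξ Nb ω| ≤ N * (b * δ) := by
    intro ω
    calc |dT ξ Nb ω| ≤ ∑ i, |ξ i ω * ∑ j ∈ Nb i, ξ j ω| := Finset.abs_sum_le_sum_abs _ _
      _ ≤ ∑ i : ι, b * δ := Finset.sum_le_sum fun i _ => by
          rw [abs_mul]
          exact mul_le_mul (h.bdd i ω) (h.etab i ω) (abs_nonneg _) hb.le
      _ = Fintype.card ι * (b * δ) := by simp
      _ ≤ N * (b * δ) := mul_le_mul_of_nonneg_right h.cardN (by positivity)
  let R : ι → Ω → ℝ := fun i ω => f (W ω) - f (W ω - η i ω) - η i ω * f' (W ω)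
  have hcomp : ∀ i ω, W ω - η i ω = ∑ j ∈ (Nb i)ᶜ, ξ j ω := by
    intro i ω
    simp only [hW, η]
    rw [← Finset.sum_add_sum_compl (Nb i)]
    ring
  have hz : ∀ i, ∫ ω, ξ i ω * f (W ω - η i ω) ∂μ = 0 := by
    intro i
    simp only [hcomp]
    have h1 := (h.ind1 i).comp (φ := id) (ψ := f) measurable_id hfc.measurable
    have := h1.integral_mul_eq_mul_integral
      (h.meas i).aestronglyMeasurable
      (hfc.measurable.comp
        (Finset.measurable_fun_sum _ fun j _ => h.meas j)).aestronglyMeasurable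
    simp only [Pi.mul_apply, Function.comp_apply, id] at this
    rw [this, h.mean i, zero_mul]
  have hzi : ∀ i, Integrable (fun ω => ξ i ω * f (W ω - η i ω)) μ := by
    intro i
    apply bint (b * 3) ((h.meas i).mul (hfc.measurable.comp (hWm.sub (hηm i))))
    intro ω
    simp only [Pi.mul_apply, Function.comp_apply]
    rw [abs_mul]
    exact mul_le_mul (h.bdd i ω) (hf _) (abs_nonneg _) hb.le
  have hpt : ∀ ω, smoothInd z ε (W ω) - c = (f' (W ω) * (1 - dT ξ Nb ω) - ∑ i, ξ i ω * R i ω)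
      - ∑ i, ξ i ω * f (W ω - η i ω) := by
    intro ω
    have e1 : ∑ i, ξ i ω * R i ω = W ω * f (W ω) - ∑ i, ξ i ω * f (W ω - η i ω)
        - dT ξ Nb ω * f' (W ω) := by
      simp only [R, dT, hW, Finset.sum_mul]
      rw [← Finset.sum_sub_distrib, ← Finset.sum_sub_distrib]
      refine Finset.sum_congr rfl fun i _ => ?_
      simp only [η]; ring
    rw [e1]
    have := he (W ω)
    linarith
  have hsi : Integrable (fun ω => smoothInd z ε (W ω)) μ := by
    apply bint 1 ((smoothInd_cont z ε).measurable.comp hWm)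
    intro ω
    simp only [Function.comp_apply]
    rw [abs_of_nonneg (smoothInd_nonneg _ _ _)]; exact smoothInd_le_one _ _ _
  have hsumi : Integrable (fun ω => ∑ i, ξ i ω * f (W ω - η i ω)) μ :=
    integrable_finsetSum _ fun i _ => hzi i
  have hmaini : Integrable (fun ω => f' (W ω) * (1 - dT ξ Nb ω) - ∑ i, ξ i ω * R i ω) μ := by
    have : Integrable (fun ω => (smoothInd z ε (W ω) - c) + ∑ i, ξ i ω * f (W ω - η i ω)) μ :=
      (hsi.sub (integrable_const c)).add hsumi
    refine this.congr (Eventually.of_forall fun ω => ?_)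
    simp only [hpt ω]; ring
  have hint : ∫ ω, smoothInd z ε (W ω) ∂μ - c =
      ∫ ω, (f' (W ω) * (1 - dT ξ Nb ω) - ∑ i, ξ i ω * R i ω) ∂μ := by
    have e1 : ∫ ω, (smoothInd z ε (W ω) - c) ∂μ = ∫ ω, smoothInd z ε (W ω) ∂μ - c := by
      rw [integral_sub hsi (integrable_const _)]; simp
    rw [← e1]
    simp only [hpt]
    rw [integral_sub hmaini hsumi, integral_finsetSum _ (fun i _ => hzi i)]
    simp [hz]
  rw [hint]
  have hW2i : Integrable (fun ω => W ω ^ 2) μ := by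
    apply bint ((N * b) ^ 2) (hWm.pow_const 2)
    intro ω
    rw [abs_pow]
    exact pow_le_pow_left₀ (abs_nonneg _) (h.Wb ω) 2
  have hT2i : Integrable (fun ω => (dT ξ Nb ω - 1) ^ 2) μ := by
    apply bint ((N * (b * δ) + 1) ^ 2) ((hTm.sub_const 1).pow_const 2)
    intro ω
    rw [abs_pow]
    apply pow_le_pow_left₀ (abs_nonneg _)
    have := abs_sub (dT ξ Nb ω) 1
    simp only [abs_one] at this
    linarith [hTb ω]
  have hms : MeasurableSet {ω | W ω ∈ Set.Icc (z - δ) (z + ε + δ)} := hWm measurableSet_Icc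
  have hli : Integrable (fun ω => locInd (z - δ) (z + ε + δ) (W ω)) μ := by
    apply bint 1
    · exact (measurable_const.indicator measurableSet_Icc).comp hWm
    · intro ω
      rw [abs_of_nonneg (locInd_nonneg _ _ _)]; exact locInd_le_one _ _ _
  have hle : ∫ ω, locInd (z - δ) (z + ε + δ) (W ω) ∂μ =
      μ.real {ω | W ω ∈ Set.Icc (z - δ) (z + ε + δ)} := by
    rw [← integral_indicator_one hms]
    rfl
  set p := μ.real {ω | W ω ∈ Set.Icc (z - δ) (z + ε + δ)} with hp
  have hbound : ∀ ω, |f' (W ω) * (1 - dT ξ Nb ω) - ∑ i, ξ i ω * R i ω| ≤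
      (2 * θ + (2 * θ)⁻¹ * (dT ξ Nb ω - 1) ^ 2) +
        θ * ((4 + W ω ^ 2) + ε⁻¹ * locInd (z - δ) (z + ε + δ) (W ω)) := by
    intro ω
    have h1 : |f' (W ω) * (1 - dT ξ Nb ω)| ≤ 2 * θ + (2 * θ)⁻¹ * (dT ξ Nb ω - 1) ^ 2 := by
      rw [abs_mul]
      have e1 : |f' (W ω)| * |1 - dT ξ Nb ω| ≤ 2 * |1 - dT ξ Nb ω| :=
        mul_le_mul_of_nonneg_right (hf' _) (abs_nonneg _)
      have e2 : (dT ξ Nb ω - 1) ^ 2 = |1 - dT ξ Nb ω| ^ 2 := by rw [sq_abs]; ring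
      rw [e2]
      refine e1.trans ?_
      set x := |1 - dT ξ Nb ω|
      have : 2 * θ + (2 * θ)⁻¹ * x ^ 2 - 2 * x = (2 * θ)⁻¹ * (2 * θ - x) ^ 2 := by
        field_simp; ring
      have h3 : 0 ≤ (2 * θ)⁻¹ * (2 * θ - x) ^ 2 := by positivity
      linarith
    have h2 : |∑ i, ξ i ω * R i ω| ≤ θ * ((4 + W ω ^ 2) + ε⁻¹ * locInd (z - δ) (z + ε + δ) (W ω)) := by
      have hl := locInd_nonneg (z - δ) (z + ε + δ) (W ω)
      set K := 3 + 2 * |W ω| + ε⁻¹ * locInd (z - δ) (z + ε + δ) (W ω) with hK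
      have hK0 : 0 ≤ K := by positivity
      have hKle : K ≤ (4 + W ω ^ 2) + ε⁻¹ * locInd (z - δ) (z + ε + δ) (W ω) := by
        have : 2 * |W ω| ≤ 1 + W ω ^ 2 := by
          rw [← sq_abs (W ω)]; nlinarith [sq_nonneg (|W ω| - 1)]
        rw [hK]; linarith
      calc |∑ i, ξ i ω * R i ω| ≤ ∑ i, |ξ i ω * R i ω| := Finset.abs_sum_le_sum_abs _ _
        _ ≤ ∑ i : ι, b * (δ ^ 2 * K) := Finset.sum_le_sum fun i _ => by
            rw [abs_mul]
            refine mul_le_mul (h.bdd i ω) ?_ (abs_nonneg _) hb.le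
            refine (stein_taylor hε hd he hf hf' (W ω) (η i ω) (h.etab i ω)).trans ?_
            apply mul_le_mul_of_nonneg_right _ hK0
            rw [← sq_abs]
            exact pow_le_pow_left₀ (abs_nonneg _) (h.etab i ω) 2
        _ = Fintype.card ι * (b * (δ ^ 2 * K)) := by simp
        _ ≤ N * (b * (δ ^ 2 * K)) := mul_le_mul_of_nonneg_right h.cardN (by positivity)
        _ = θ * K := by rw [hθ, hδ]; ring
        _ ≤ _ := mul_le_mul_of_nonneg_left hKle hθ0.le
    have := abs_sub (f' (W ω) * (1 - dT ξ Nb ω)) (∑ i, ξ i ω * R i ω)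
    linarith
  have i1 : Integrable (fun ω => 2 * θ + (2 * θ)⁻¹ * (dT ξ Nb ω - 1) ^ 2) μ :=
    (integrable_const _).add (hT2i.const_mul _)
  have i3 : Integrable (fun ω => 4 + W ω ^ 2) μ := (integrable_const _).add hW2i
  have i4 : Integrable (fun ω => ε⁻¹ * locInd (z - δ) (z + ε + δ) (W ω)) μ := hli.const_mul _
  have i2 : Integrable (fun ω => θ * ((4 + W ω ^ 2) + ε⁻¹ * locInd (z - δ) (z + ε + δ) (W ω))) μ :=
    (i3.add i4).const_mul _
  have hfin := norm_integral_le_of_norm_le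
    (f := fun ω => f' (W ω) * (1 - dT ξ Nb ω) - ∑ i, ξ i ω * R i ω) (i1.add i2) (Eventually.of_forall hbound)
  rw [Real.norm_eq_abs] at hfin
  refine hfin.trans ?_
  simp only [Pi.add_apply]
  have hn : ∫ ω, W ω ^ 2 ∂μ = 1 := h.norm
  have q1 : ∫ ω, (2 * θ + (2 * θ)⁻¹ * (dT ξ Nb ω - 1) ^ 2) ∂μ =
      2 * θ + (2 * θ)⁻¹ * ∫ ω, (dT ξ Nb ω - 1) ^ 2 ∂μ := by
    rw [integral_add (integrable_const _) (hT2i.const_mul _),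
      integral_const_mul (2 * θ)⁻¹ (fun ω => (dT ξ Nb ω - 1) ^ 2), integral_const]
    simp
  have q2 : ∫ ω, (4 + W ω ^ 2) ∂μ = 4 + 1 := by
    rw [integral_add (integrable_const _) hW2i, hn]
    simp
  have q3 : ∫ ω, ε⁻¹ * locInd (z - δ) (z + ε + δ) (W ω) ∂μ = ε⁻¹ * p := by
    rw [integral_const_mul, hle]
  have q4 : ∫ ω, θ * ((4 + W ω ^ 2) + ε⁻¹ * locInd (z - δ) (z + ε + δ) (W ω)) ∂μ =
      θ * ((4 + 1) + ε⁻¹ * p) := by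
    rw [integral_const_mul θ (fun ω => (4 + W ω ^ 2) + ε⁻¹ * locInd (z - δ) (z + ε + δ) (W ω)),
      integral_add i3 i4, q2, q3]
  rw [integral_add i1 i2, q1, q4]
  have hv := h.T_var
  have hv2 : 4 * (N * D ^ 3 * b ^ 4) ≤ 4 * θ ^ 2 := by
    have : θ ^ 2 = (N * D ^ 3 * b ^ 4) * (N * D * b ^ 2) := by rw [hθ]; ring
    rw [this]
    have h1 := h.ge1
    have : 0 ≤ N * D ^ 3 * b ^ 4 := by positivity
    nlinarith
  have hv3 : (2 * θ)⁻¹ * ∫ ω, (dT ξ Nb ω - 1) ^ 2 ∂μ ≤ 2 * θ := by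
    rw [inv_mul_le_iff₀ (by positivity)]
    linarith
  linarith

lemma DepData.berry (h : DepData μ ξ Nb b N D) (κ : ℝ)
    (hκ : ∀ t, |(μ {ω | ∑ i, ξ i ω ≤ t}).toReal - (gaussianReal 0 1 (Set.Iic t)).toReal| ≤ κ)
    (t : ℝ) : |(μ {ω | ∑ i, ξ i ω ≤ t}).toReal - (gaussianReal 0 1 (Set.Iic t)).toReal| ≤
      κ / 2 + 12 * (N * D ^ 2 * b ^ 3) := by
  set θ := N * D ^ 2 * b ^ 3 with hθ
  have hb := h.bpos
  have hN := h.Npos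
  have hD := h.Dpos
  have hθ0 : 0 < θ := by positivity
  have hδθ : D * b ≤ θ := by
    have : θ = (D * b) * (N * D * b ^ 2) := by rw [hθ]; ring
    rw [this]
    have := h.ge1
    have : 0 < D * b := by positivity
    nlinarith
  set δ := D * b with hδ
  have hδ0 : 0 < δ := by positivity
  set F : ℝ → ℝ := fun t => (μ {ω | ∑ i, ξ i ω ≤ t}).toReal with hF
  set Φ : ℝ → ℝ := fun t => (gaussianReal 0 1 (Set.Iic t)).toReal with hΦ
  have hκ' : ∀ t, |F t - Φ t| ≤ κ := hκ
  have hms : ∀ t, MeasurableSet {ω | ∑ i, ξ i ω ≤ t} := fun t => h.Wm measurableSet_Iic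
  have hε : (0:ℝ) < 4 * θ := by positivity
  -- the main smooth estimate
  have hs : ∀ z, |∫ ω, smoothInd z (4 * θ) (∑ i, ξ i ω) ∂μ -
      ∫ x, smoothInd z (4 * θ) x ∂gaussianReal 0 1| ≤ κ / 2 + 10 * θ := by
    intro z
    refine (h.smooth z (4 * θ) hε).trans ?_
    have hsub : {ω | ∑ i, ξ i ω ∈ Set.Icc (z - δ) (z + 4 * θ + δ)} ⊆
        {ω | ∑ i, ξ i ω ≤ z + 4 * θ + δ} \ {ω | ∑ i, ξ i ω ≤ z - 2 * δ} := by
      intro ω hω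
      simp only [Set.mem_ofPred_eq, Set.mem_Icc, Set.mem_sdiff, not_le] at hω ⊢
      exact ⟨hω.2, by linarith [hω.1]⟩
    have hp : μ.real {ω | ∑ i, ξ i ω ∈ Set.Icc (z - δ) (z + 4 * θ + δ)} ≤
        F (z + 4 * θ + δ) - F (z - 2 * δ) := by
      refine (measureReal_mono hsub).trans_eq ?_
      rw [measureReal_sdiff _ (hms _)]
      · rfl
      · intro ω hω
        simp only [Set.mem_ofPred_eq] at hω ⊢
        linarith
    have h1 := abs_le.1 (hκ' (z + 4 * θ + δ))
    have h2 := abs_le.1 (hκ' (z - 2 * δ))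
    have h3 : Φ (z + 4 * θ + δ) - Φ (z - 2 * δ) ≤ ((z + 4 * θ + δ) - (z - 2 * δ)) / 2 :=
      gauss_Iic_sub (by linarith)
    have hp2 : μ.real {ω | ∑ i, ξ i ω ∈ Set.Icc (z - δ) (z + 4 * θ + δ)} ≤ 2 * κ + 7 / 2 * θ := by
      linarith
    set p := μ.real {ω | ∑ i, ξ i ω ∈ Set.Icc (z - δ) (z + 4 * θ + δ)}
    have e : θ * (9 + (4 * θ)⁻¹ * p) = 9 * θ + p / 4 := by field_simp
    rw [← hθ, e]
    linarith
  have hG1 : ∀ z, Φ z ≤ ∫ x, smoothInd z (4 * θ) x ∂gaussianReal 0 1 ∧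
      ∫ x, smoothInd z (4 * θ) x ∂gaussianReal 0 1 ≤ Φ (z + 4 * θ) := by
    intro z
    exact smooth_sandwich (gaussianReal 0 1) id measurable_id hε z
  have hW1 : ∀ z, F z ≤ ∫ ω, smoothInd z (4 * θ) (∑ i, ξ i ω) ∂μ ∧
      ∫ ω, smoothInd z (4 * θ) (∑ i, ξ i ω) ∂μ ≤ F (z + 4 * θ) := fun z => smooth_sandwich μ _ h.Wm hε z
  change |F t - Φ t| ≤ _
  have e : t - 4 * θ + 4 * θ = t := by ring
  have a1 := abs_le.1 (hs t)
  have a2 := abs_le.1 (hs (t - 4 * θ))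
  have b1 := hW1 t
  have b2 := hW1 (t - 4 * θ)
  have c1 := hG1 t
  have c2 := hG1 (t - 4 * θ)
  rw [e] at b2 c2
  have d1 : Φ (t + 4 * θ) - Φ t ≤ (t + 4 * θ - t) / 2 := gauss_Iic_sub (by linarith)
  have d2 : Φ t - Φ (t - 4 * θ) ≤ (t - (t - 4 * θ)) / 2 := gauss_Iic_sub (by linarith)
  rw [abs_le]
  constructor <;> linarith [b1.1, b2.2, c1.2, c2.1]

lemma DepData.dkol (h : DepData μ ξ Nb b N D) :
    dKolNormal μ (fun ω => ∑ i, ξ i ω) ≤ 24 * (N * D ^ 2 * b ^ 3) := by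
  have hbd : BddAbove (Set.range fun t : ℝ =>
      |(μ {ω | ∑ i, ξ i ω ≤ t}).toReal - (gaussianReal 0 1 (Set.Iic t)).toReal|) := by
    refine ⟨1, ?_⟩
    rintro _ ⟨t, rfl⟩
    have h1 : (μ {ω | ∑ i, ξ i ω ≤ t}).toReal ≤ 1 := measureReal_le_one
    have h2 : (gaussianReal 0 1 (Set.Iic t)).toReal ≤ 1 := measureReal_le_one
    have h3 : 0 ≤ (μ {ω | ∑ i, ξ i ω ≤ t}).toReal := ENNReal.toReal_nonneg
    have h4 : 0 ≤ (gaussianReal 0 1 (Set.Iic t)).toReal := ENNReal.toReal_nonneg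
    simp only
    rw [abs_le]; constructor <;> linarith
  have key : dKolNormal μ (fun ω => ∑ i, ξ i ω) ≤
      dKolNormal μ (fun ω => ∑ i, ξ i ω) / 2 + 12 * (N * D ^ 2 * b ^ 3) :=
    ciSup_le fun t => h.berry _ (fun t => le_ciSup hbd t) t
  linarith
end

section
variable {Ω 𝒮 : Type*} [MeasurableSpace Ω] [MeasurableSpace 𝒮] {n ℓ : ℕ}

/-- sigma-algebra generated by the variables used by the tuples in `A`. -/
def tupSig (X : Fin n → Ω → 𝒮) (A : Set (Fin ℓ → Fin n)) : MeasurableSpace Ω :=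
  MeasurableSpace.comap (fun ω (k : {k | ∃ α ∈ A, ∃ i, α i = k}) => X k.1 ω) inferInstance

lemma tupSig_meas (X : Fin n → Ω → 𝒮) (A : Set (Fin ℓ → Fin n)) (α : Fin ℓ → Fin n) (hα : α ∈ A)
    (g : (Fin ℓ → 𝒮) → ℝ) (hg : Measurable g) :
    Measurable[tupSig X A] (fun ω => g (fun i => X (α i) ω)) := by
  let _ := tupSig X A
  have h0 : Measurable[tupSig X A] (fun ω (k : {k | ∃ α ∈ A, ∃ i, α i = k}) => X k.1 ω) :=
    comap_measurable _
  refine hg.comp ?_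
  refine measurable_pi_lambda _ fun i => ?_
  exact (measurable_pi_apply (⟨α i, α, hα, i, rfl⟩ : {k | ∃ α ∈ A, ∃ i, α i = k})).comp h0

lemma tupSig_indep {μ : Measure Ω} {X : Fin n → Ω → 𝒮} {G : SimpleGraph (Fin n)}
    (hG : IsDependencyGraph μ G X) (A B : Set (Fin ℓ → Fin n))
    (hAB : ∀ α ∈ A, ∀ β ∈ B, ¬ ∃ i j, α i = β j ∨ G.Adj (α i) (β j))
    {g h : Ω → ℝ} (hg : Measurable[tupSig X A] g) (hh : Measurable[tupSig X B] h) :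
    IndepFun g h μ := by
  have h1 := hG {k | ∃ α ∈ A, ∃ i, α i = k} {k | ∃ α ∈ B, ∃ i, α i = k}
    (by
      rw [Set.disjoint_left]
      rintro k ⟨α, hα, i, rfl⟩ ⟨β, hβ, j, hj⟩
      exact hAB α hα β hβ ⟨i, j, Or.inl hj.symm⟩)
    (by
      rintro k ⟨α, hα, i, rfl⟩ k' ⟨β, hβ, j, rfl⟩ hadj
      exact hAB α hα β hβ ⟨i, j, Or.inr hadj⟩)
  rw [IndepFun_iff_Indep] at h1 ⊢
  exact indep_of_indep_of_le_left (indep_of_indep_of_le_right h1 hh.comap_le) hg.comap_le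

open Classical in
def tupNb (G : SimpleGraph (Fin n)) (α : {α : Fin ℓ → Fin n // Function.Injective α}) :
    Finset {α : Fin ℓ → Fin n // Function.Injective α} :=
  Finset.univ.filter fun β => ∃ i j, α.1 i = β.1 j ∨ G.Adj (α.1 i) (β.1 j)

lemma tupNb_card (G : SimpleGraph (Fin n)) [DecidableRel G.Adj] {m : ℕ}
    (hdeg : ∀ k, G.degree k ≤ m) (α : {α : Fin ℓ → Fin n // Function.Injective α}) :
    (tupNb G α).card ≤ ℓ ^ 2 * (m + 1) * n ^ (ℓ - 1) := by
  classical
  let C : Fin n → Finset (Fin n) := fun k => insert k (G.neighborFinset k)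
  have hC : ∀ k, (C k).card ≤ m + 1 := fun k =>
    (Finset.card_insert_le _ _).trans (Nat.add_le_add_right (hdeg k) 1)
  let B : Fin ℓ × Fin ℓ → Finset (Fin ℓ → Fin n) := fun p =>
    Fintype.piFinset (Function.update (fun _ => Finset.univ) p.2 (C (α.1 p.1)))
  have hB : ∀ p, (B p).card ≤ (m + 1) * n ^ (ℓ - 1) := by
    intro p
    simp only [B, Fintype.card_piFinset]
    rw [Fintype.prod_eq_mul_prod_compl p.2]
    rw [Function.update_self]
    apply Nat.mul_le_mul (hC _)
    apply le_of_eq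
    rw [Finset.prod_congr rfl (g := fun _ => n)]
    · simp [Finset.card_compl]
    · intro k hk
      have : k ≠ p.2 := by simpa using hk
      rw [Function.update_of_ne this]; simp
  have hsub : (tupNb G α).image Subtype.val ⊆ Finset.univ.biUnion B := by
    intro β hβ
    simp only [tupNb, Finset.mem_image, Finset.mem_filter, Finset.mem_univ, true_and] at hβ
    obtain ⟨β, ⟨i, j, hij⟩, rfl⟩ := hβ
    simp only [Finset.mem_biUnion, Finset.mem_univ, true_and]
    refine ⟨(i, j), ?_⟩
    simp only [B, Fintype.mem_piFinset]
    intro k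
    by_cases hk : k = j
    · subst hk
      rw [Function.update_self]
      simp only [C, Finset.mem_insert, SimpleGraph.mem_neighborFinset]
      rcases hij with h | h
      · exact Or.inl h.symm
      · exact Or.inr h
    · rw [Function.update_of_ne hk]; simp
  calc (tupNb G α).card = ((tupNb G α).image Subtype.val).card :=
        (Finset.card_image_of_injective _ Subtype.val_injective).symm
    _ ≤ (Finset.univ.biUnion B).card := Finset.card_le_card hsub
    _ ≤ ∑ p, (B p).card := Finset.card_biUnion_le
    _ ≤ ∑ p : Fin ℓ × Fin ℓ, (m + 1) * n ^ (ℓ - 1) := Finset.sum_le_sum fun p _ => hB p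
    _ = ℓ ^ 2 * (m + 1) * n ^ (ℓ - 1) := by simp; ring

lemma tup_card : Fintype.card {α : Fin ℓ → Fin n // Function.Injective α} ≤ n ^ ℓ := by
  classical
  refine (Fintype.card_subtype_le _).trans ?_
  simp

lemma dKol_congr {μ : Measure Ω} {W W' : Ω → ℝ} (h : W =ᵐ[μ] W') :
    dKolNormal μ W = dKolNormal μ W' := by
  unfold dKolNormal
  congr 1; ext t
  have : μ {ω | W ω ≤ t} = μ {ω | W' ω ≤ t} := by
    apply measure_congr
    filter_upwards [h] with ω hω
    change (W ω ≤ t) = (W' ω ≤ t)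
    rw [hω]
  rw [this]
end

lemma final_arith (q a r L σ : ℝ) (hq : 0 < q) (ha : 0 < a) (hr : 0 < r) (hL : 0 < L) (hσ : 0 < σ) :
    24 * (a * r * (q * a) ^ 2 * (2 * L / σ) ^ 3) ≤
      227.5 * √(q / r) * ((1 / L) * √(σ ^ 2 / (q * (a ^ 2 * r))))⁻¹ ^ 3 := by
  rw [Real.sqrt_div hq.le, Real.sqrt_div (sq_nonneg σ), Real.sqrt_sq hσ.le, Real.sqrt_mul hq.le,
    Real.sqrt_mul (sq_nonneg a), Real.sqrt_sq ha.le]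
  obtain ⟨s, hs, rfl⟩ : ∃ s : ℝ, 0 < s ∧ q = s ^ 2 := ⟨√q, Real.sqrt_pos.2 hq, (Real.sq_sqrt hq.le).symm⟩
  obtain ⟨t, ht, rfl⟩ : ∃ s : ℝ, 0 < s ∧ r = s ^ 2 := ⟨√r, Real.sqrt_pos.2 hr, (Real.sq_sqrt hr.le).symm⟩
  rw [Real.sqrt_sq hs.le, Real.sqrt_sq ht.le]
  have e1 : 24 * (a * t ^ 2 * (s ^ 2 * a) ^ 2 * (2 * L / σ) ^ 3) =
      192 * (a ^ 3 * t ^ 2 * s ^ 4 * L ^ 3 / σ ^ 3) := by field_simp; ring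
  have e2 : 227.5 * (s / t) * (1 / L * (σ / (s * (a * t))))⁻¹ ^ 3 =
      227.5 * (a ^ 3 * t ^ 2 * s ^ 4 * L ^ 3 / σ ^ 3) := by field_simp
  rw [e1, e2]
  have : 0 < a ^ 3 * t ^ 2 * s ^ 4 * L ^ 3 / σ ^ 3 := by positivity
  linarith

/-- Corollary 5.4 of the paper: Berry–Esseen bound for U-statistics of uniformly bounded
kernels over random variables with a dependency graph. -/
theorem ustatistic_berry_esseen_bounded
    {Ω 𝒮 : Type*} [MeasurableSpace Ω] [MeasurableSpace 𝒮]
    (μ : Measure Ω) [IsProbabilityMeasure μ]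
    (n ℓ m : ℕ) (hℓ : 1 ≤ ℓ) (hℓn : ℓ ≤ n)
    (X : Fin n → Ω → 𝒮) (hXmeas : ∀ k, Measurable (X k))
    (G : SimpleGraph (Fin n)) [DecidableRel G.Adj]
    (hG : IsDependencyGraph μ G X)
    (hdeg : ∀ k, G.degree k ≤ m)
    (f : (Fin ℓ → 𝒮) → ℝ) (hf : Measurable f)
    (c : {α : Fin ℓ → Fin n // Function.Injective α} → ℝ)
    (L : ℝ) (hL : 0 < L)
    (hbdd : ∀ α : {α : Fin ℓ → Fin n // Function.Injective α},
      ∀ᵐ ω ∂μ, |f (fun i => X (α.1 i) ω) - c α| ≤ L)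
    (U Vn : Ω → ℝ)
    (hU : U = fun ω => (1 / (Nat.factorial ℓ * Nat.choose n ℓ : ℝ)) *
      ∑ α : {α : Fin ℓ → Fin n // Function.Injective α}, f (fun i => X (α.1 i) ω))
    (hVn : Vn = fun ω =>
      ∑ α : {α : Fin ℓ → Fin n // Function.Injective α}, f (fun i => X (α.1 i) ω))
    (hVarU : 0 < variance U μ)
    (Ξ : ℝ) (hΞ : Ξ = (1 / L) *
      Real.sqrt (variance Vn μ / ((ℓ : ℝ) ^ 2 * (m + 1) * (n : ℝ) ^ (2 * ℓ - 1)))) :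
    (0 < Ξ ∧ Ξ ≤ 1) ∧
    dKolNormal μ (fun ω => (U ω - ∫ ω', U ω' ∂μ) / Real.sqrt (variance U μ)) ≤
      227.5 * Real.sqrt ((ℓ : ℝ) ^ 2 * (m + 1) / n) * Ξ⁻¹ ^ 3 := by
  classical
  have hn : 0 < n := by omega
  -- truncated variables
  let cl : ℝ → ℝ → ℝ := fun a x => max (a - L) (min (a + L) x)
  let Y : {α : Fin ℓ → Fin n // Function.Injective α} → Ω → ℝ :=
    fun α ω => cl (c α) (f (fun i => X (α.1 i) ω))
  have hclm : ∀ a, Measurable (fun x => cl a (f x)) := fun a =>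
    measurable_const.max (measurable_const.min hf)
  have hYmem : ∀ α ω, Y α ω ∈ Set.Icc (c α - L) (c α + L) := fun α ω =>
    ⟨le_max_left _ _, max_le (by linarith) (min_le_left _ _)⟩
  have hYm : ∀ α, Measurable (Y α) := fun α =>
    (hclm (c α)).comp (measurable_pi_lambda _ fun i => hXmeas _)
  have hYae : ∀ α, (fun ω => f (fun i => X (α.1 i) ω)) =ᵐ[μ] Y α := by
    intro α
    filter_upwards [hbdd α] with ω hω
    rw [abs_le] at hω
    simp only [Y, cl]
    rw [min_eq_right (by linarith), max_eq_right (by linarith)]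
  have hYi : ∀ α, Integrable (Y α) μ := fun α => by
    apply bint (|c α| + L) (hYm α)
    intro ω
    have := hYmem α ω
    have h1 := neg_abs_le (c α)
    have h2 := le_abs_self (c α)
    rw [abs_le]; constructor <;> linarith [this.1, this.2]
  let e : {α : Fin ℓ → Fin n // Function.Injective α} → ℝ := fun α => ∫ ω, Y α ω ∂μ
  have hemem : ∀ α, e α ∈ Set.Icc (c α - L) (c α + L) := by
    intro α
    constructor
    · have := integral_mono (integrable_const (c α - L)) (hYi α) (fun ω => (hYmem α ω).1)
      simpa using this
    · have := integral_mono (hYi α) (integrable_const (c α + L)) (fun ω => (hYmem α ω).2)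
      simpa using this
  have hVae : Vn =ᵐ[μ] fun ω => ∑ α, Y α ω := by
    rw [hVn]
    have := ae_all_iff.2 hYae
    filter_upwards [this] with ω hω
    exact Finset.sum_congr rfl fun α _ => hω α
  have hYsi : Integrable (fun ω => ∑ α, Y α ω) μ := integrable_finsetSum _ fun α _ => hYi α
  have hVmean : ∫ ω, Vn ω ∂μ = ∑ α, e α := by
    rw [integral_congr_ae hVae, integral_finsetSum _ fun α _ => hYi α]
  set k : ℝ := 1 / (Nat.factorial ℓ * Nat.choose n ℓ : ℝ) with hk
  have hk0 : 0 < k := by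
    have h1 : 0 < (Nat.factorial ℓ : ℝ) := by exact_mod_cast Nat.factorial_pos ℓ
    have h2 : 0 < (Nat.choose n ℓ : ℝ) := by exact_mod_cast Nat.choose_pos hℓn
    positivity
  have hUV : U = fun ω => k * Vn ω := by rw [hU, hVn]
  have hVarUV : variance U μ = k ^ 2 * variance Vn μ := by
    rw [hUV, variance_const_mul]
  have hV0 : 0 < variance Vn μ := by
    rw [hVarUV] at hVarU
    exact pos_of_mul_pos_right hVarU (by positivity)
  set V := variance Vn μ with hVdef
  set σ := √V with hσ
  have hσ0 : 0 < σ := Real.sqrt_pos.2 hV0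
  have hσ2 : σ ^ 2 = V := Real.sq_sqrt hV0.le
  have hVe : V = ∫ ω, (∑ α, (Y α ω - e α)) ^ 2 ∂μ := by
    rw [hVdef, variance_congr hVae, variance_eq_integral hYsi.aemeasurable]
    rw [integral_finsetSum _ fun α _ => hYi α]
    simp only [Finset.sum_sub_distrib, e]
  let ξ : {α : Fin ℓ → Fin n // Function.Injective α} → Ω → ℝ := fun α ω => (Y α ω - e α) / σ
  have hξm : ∀ α, Measurable (ξ α) := fun α => ((hYm α).sub_const _).div_const _
  have hξb : ∀ α ω, |ξ α ω| ≤ 2 * L / σ := by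
    intro α ω
    simp only [ξ]
    rw [abs_div, abs_of_pos hσ0]
    apply div_le_div_of_nonneg_right _ hσ0.le
    have h1 := hYmem α ω
    have h2 := hemem α
    rw [abs_le]; constructor <;> linarith [h1.1, h1.2, h2.1, h2.2]
  have hξmean : ∀ α, ∫ ω, ξ α ω ∂μ = 0 := by
    intro α
    simp only [ξ]
    rw [integral_div, integral_sub (hYi α) (integrable_const _)]
    simp [e]
  have hξ2 : ∀ α, ∫ ω, ξ α ω ^ 2 ∂μ ≤ L ^ 2 / σ ^ 2 := by
    intro α
    simp only [ξ, div_pow]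
    rw [integral_div]
    apply div_le_div_of_nonneg_right _ (by positivity)
    have h1 := variance_le_sq_of_bounded (μ := μ) (X := Y α) (a := c α - L) (b := c α + L)
      (Eventually.of_forall (hYmem α)) (hYm α).aemeasurable
    rw [variance_eq_integral (hYm α).aemeasurable] at h1
    refine h1.trans_eq ?_
    ring
  have hξnorm : ∫ ω, (∑ α, ξ α ω) ^ 2 ∂μ = 1 := by
    have : ∀ ω, (∑ α, ξ α ω) ^ 2 = (∑ α, (Y α ω - e α)) ^ 2 / σ ^ 2 := by
      intro ω
      simp only [ξ]
      rw [← Finset.sum_div, div_pow]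
    simp only [this]
    rw [integral_div, ← hVe, hσ2, div_self hV0.ne']
  have hξsig : ∀ (A : Set (Fin ℓ → Fin n)) (α : {α : Fin ℓ → Fin n // Function.Injective α}),
      α.1 ∈ A → Measurable[tupSig X A] (ξ α) := by
    intro A α hα
    exact tupSig_meas X A α.1 hα (fun x => (cl (c α) (f x) - e α) / σ)
      (((hclm (c α)).sub_const _).div_const _)
  have hmem : ∀ α β : {α : Fin ℓ → Fin n // Function.Injective α}, β ∈ tupNb G α ↔
      ∃ i j, α.1 i = β.1 j ∨ G.Adj (α.1 i) (β.1 j) := by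
    intro α β; simp [tupNb]
  have hind2 : ∀ α β, β ∉ tupNb G α → IndepFun (ξ α) (ξ β) μ := by
    intro α β h
    rw [hmem] at h
    exact tupSig_indep hG {α.1} {β.1} (by rintro _ rfl _ rfl; exact h)
      (hξsig _ α rfl) (hξsig _ β rfl)
  set N : ℝ := (n : ℝ) ^ ℓ with hN
  set D : ℝ := (ℓ : ℝ) ^ 2 * (m + 1) * (n : ℝ) ^ (ℓ - 1) with hD
  have hn0 : (0:ℝ) < n := by exact_mod_cast hn
  have hl0 : (0:ℝ) < ℓ := by exact_mod_cast hℓ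
  have hN0 : 0 < N := by positivity
  have hD0 : 0 < D := by positivity
  have hcN : (Fintype.card {α : Fin ℓ → Fin n // Function.Injective α} : ℝ) ≤ N := by
    rw [hN]; exact_mod_cast tup_card
  have hcD : ∀ α : {α : Fin ℓ → Fin n // Function.Injective α}, ((tupNb G α).card : ℝ) ≤ D := by
    intro α
    rw [hD]; exact_mod_cast tupNb_card G hdeg α
  have hvb : 1 ≤ N * D * (L ^ 2 / σ ^ 2) := by
    have h1 := var_bound μ Finset.univ ξ hξm (2 * L / σ) hξb (tupNb G) D (L ^ 2 / σ ^ 2)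
      (fun α _ => hcD α) (by positivity)
      (fun α _ β _ h => by
        have := (hind2 α β h).integral_mul_eq_mul_integral (hξm α).aestronglyMeasurable
          (hξm β).aestronglyMeasurable
        simp only [Pi.mul_apply] at this
        rw [this, hξmean α, zero_mul]) hξ2
    rw [hξnorm] at h1
    refine h1.trans ?_
    have : 0 ≤ D * (L ^ 2 / σ ^ 2) := by positivity
    rw [Finset.card_univ]
    nlinarith
  have hdata : DepData μ ξ (tupNb G) (2 * L / σ) N D :=
    { meas := hξm
      bpos := by positivity
      bdd := hξb
      mean := hξmean
      symm := by
        intro α β h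
        rw [hmem] at h ⊢
        obtain ⟨i, j, h⟩ := h
        exact ⟨j, i, h.imp Eq.symm SimpleGraph.Adj.symm⟩
      ind1 := by
        intro α
        refine tupSig_indep hG {α.1} {β | ∃ β' ∈ (tupNb G α)ᶜ, β'.1 = β} ?_ (hξsig _ α rfl) ?_
        · rintro _ rfl _ ⟨β, hβ, rfl⟩
          rw [Finset.mem_compl, hmem] at hβ
          exact hβ
        · exact Finset.measurable_fun_sum _ fun β hβ => hξsig _ β ⟨β, hβ, rfl⟩
      ind2 := hind2
      ind3 := by
        intro i j k l h1 h2 h3 h4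
        rw [hmem] at h1 h2 h3 h4
        refine tupSig_indep hG {i.1, j.1} {k.1, l.1} ?_ ?_ ?_
        · rintro _ (rfl | rfl) _ (rfl | rfl) <;> assumption
        · exact (hξsig _ i (by simp)).mul (hξsig _ j (by simp))
        · exact (hξsig _ k (by simp)).mul (hξsig _ l (by simp))
      Npos := hN0
      Dpos := hD0
      cardN := hcN
      cardD := hcD
      norm := hξnorm
      ge1 := by
        refine hvb.trans ?_
        apply mul_le_mul_of_nonneg_left _ (by positivity)
        rw [div_pow]
        apply div_le_div_of_nonneg_right _ (by positivity)
        nlinarith [sq_nonneg L] }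
  have hmain := hdata.dkol
  have hWeq : (fun ω => (U ω - ∫ ω', U ω' ∂μ) / Real.sqrt (variance U μ)) =ᵐ[μ]
      fun ω => ∑ α, ξ α ω := by
    have hs : Real.sqrt (variance U μ) = k * σ := by
      rw [hVarUV, Real.sqrt_mul (by positivity), Real.sqrt_sq hk0.le]
    have hm : ∫ ω', U ω' ∂μ = k * ∑ α, e α := by
      rw [hUV, integral_const_mul, hVmean]
    rw [hs, hm, hUV]
    filter_upwards [hVae] with ω hω
    simp only [ξ]
    rw [hω, ← Finset.sum_div, Finset.sum_sub_distrib, ← mul_sub, mul_div_mul_left _ _ hk0.ne']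
  rw [dKol_congr hWeq]
  set a : ℝ := (n : ℝ) ^ (ℓ - 1) with ha
  set q : ℝ := (ℓ : ℝ) ^ 2 * (m + 1) with hq
  have ha0 : 0 < a := by positivity
  have hq0 : 0 < q := by positivity
  have hNa : N = a * n := by
    rw [hN, ha, ← pow_succ]; congr 1; omega
  have hna : (n : ℝ) ^ (2 * ℓ - 1) = a ^ 2 * n := by
    rw [ha, ← pow_mul, ← pow_succ]; congr 1; omega
  rw [hna, ← hσ2] at hΞ
  refine ⟨⟨?_, ?_⟩, ?_⟩
  · rw [hΞ]; positivity
  · rw [hΞ, one_div, inv_mul_le_iff₀ hL, mul_one]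
    apply Real.sqrt_le_iff.2 ⟨hL.le, ?_⟩
    rw [div_le_iff₀ (by positivity)]
    rw [hNa, hD, ← mul_div_assoc, le_div_iff₀ (by positivity)] at hvb
    linarith
  · refine hmain.trans ?_
    rw [hΞ, hNa]
    exact final_arith q a n L σ hq0 ha0 hn0 hL hσ0
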